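/- arXiv:2202.08573 — 2 statements merged into one kernel-verified Lean document; each statement's English description precedes it below -/
import Mathlib

section
/- Consider a linear model with orthogonal design X′X = nI_p, response Y ∈ ℝ^n, tuning vector Λ = (λ₁,…,λ_p) with λ₁ ≥ … ≥ λ_p ≥ 0, OLS estimator β̂^OLS = (1/n)X′Y and SLOPE estimator β̂^SLOPE = argmin_b [½‖Y − Xb‖₂² + J_Λ(b)]. Let π be a permutation of (1,…,p) with |β̂^OLS_{π(1)}| ≥ … ≥ |β̂^OLS_{π(p)}|. Then for each i ∈ {1,…,p−1}, if |β̂^OLS_{π(i)}| − |β̂^OLS_{π(i+1)}| ≤ (λ_i − λ_{i+1})/n, then |β̂^SLOPE_{π(i)}| = |β̂^SLOPE_{π(i+1)}|. -/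
open Matrix

/-- The SLOPE (sorted ℓ₁) norm `J_Λ(b) = ∑ Λᵢ |b|₍ᵢ₎`, expressed (for `Λ` sorted
in decreasing order) as the maximum over permutations of `∑ Λᵢ |b (σ i)|`. -/
noncomputable def slopeNorm {p : ℕ} (Λ : Fin p → ℝ) (b : Fin p → ℝ) : ℝ :=
  ⨆ σ : Equiv.Perm (Fin p), ∑ i, Λ i * |b (σ i)|

/-- The SLOPE objective function `b ↦ ½‖Y - Xb‖₂² + J_Λ(b)`. -/
noncomputable def slopeObj {n p : ℕ} (X : Matrix (Fin n) (Fin p) ℝ) (Y : Fin n → ℝ)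
    (Λ : Fin p → ℝ) (b : Fin p → ℝ) : ℝ :=
  (1 / 2) * ∑ i, (Y i - (X *ᵥ b) i) ^ 2 + slopeNorm Λ b

lemma aux_le_slopeNorm {p : ℕ} (Λ b : Fin p → ℝ) (σ : Equiv.Perm (Fin p)) :
    ∑ i, Λ i * |b (σ i)| ≤ slopeNorm Λ b :=
  le_ciSup (f := fun σ : Equiv.Perm (Fin p) => ∑ i, Λ i * |b (σ i)|)
    (Set.finite_range _).bddAbove σ

lemma aux_slopeNorm_sorted {p : ℕ} (Λ b : Fin p → ℝ) (hΛ : Antitone Λ)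
    (τ : Equiv.Perm (Fin p)) (hb : Antitone fun i => |b (τ i)|) :
    slopeNorm Λ b = ∑ i, Λ i * |b (τ i)| := by
  apply le_antisymm _ (aux_le_slopeNorm Λ b τ)
  apply ciSup_le
  intro σ
  have hm : Monovary Λ (fun i => |b (τ i)|) := hΛ.monovary hb
  have := hm.sum_mul_comp_perm_le_sum_mul (σ := σ.trans τ.symm)
  simpa using this

lemma aux_quad {n p : ℕ} (hn : 0 < n)
    (X : Matrix (Fin n) (Fin p) ℝ) (Y : Fin n → ℝ)
    (hX : Xᵀ * X = (n : ℝ) • (1 : Matrix (Fin p) (Fin p) ℝ))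
    (z : Fin p → ℝ) (hz : z = (1 / (n : ℝ)) • (Xᵀ *ᵥ Y)) (b : Fin p → ℝ) :
    ∑ i, (Y i - (X *ᵥ b) i) ^ 2 = (Y ⬝ᵥ Y - n * (z ⬝ᵥ z)) + n * ∑ j, (b j - z j) ^ 2 := by
  have hn' : (n : ℝ) ≠ 0 := by positivity
  have h1 : ∑ i, (Y i - (X *ᵥ b) i) ^ 2 = (Y - X *ᵥ b) ⬝ᵥ (Y - X *ᵥ b) := by
    simp [dotProduct, sq]
  have h2 : ∑ j, (b j - z j) ^ 2 = (b - z) ⬝ᵥ (b - z) := by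
    simp [dotProduct, sq]
  have h3 : Xᵀ *ᵥ Y = (n : ℝ) • z := by
    rw [hz, smul_smul]; field_simp; simp
  have h4 : (X *ᵥ b) ⬝ᵥ Y = n * (b ⬝ᵥ z) := by
    rw [dotProduct_comm, dotProduct_mulVec, ← mulVec_transpose, h3, smul_dotProduct,
      dotProduct_comm, smul_eq_mul]
  have h5 : (X *ᵥ b) ⬝ᵥ (X *ᵥ b) = n * (b ⬝ᵥ b) := by
    rw [dotProduct_mulVec, ← mulVec_transpose, mulVec_mulVec, hX, smul_mulVec, one_mulVec,
      smul_dotProduct, smul_eq_mul]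
  rw [h1, h2]
  simp only [sub_dotProduct, dotProduct_sub]
  rw [dotProduct_comm Y (X *ᵥ b), dotProduct_comm z b, h4, h5]
  ring

lemma aux_sum_pair {p : ℕ} (F G : Fin p → ℝ) (a c : Fin p) (hac : a ≠ c)
    (h : ∀ j, j ≠ a → j ≠ c → F j = G j) :
    ∑ j, F j - ∑ j, G j = (F a - G a) + (F c - G c) := by
  rw [← Finset.sum_sub_distrib, ← Finset.sum_pair (f := fun j => F j - G j) hac]
  symm
  apply Finset.sum_subset (Finset.subset_univ _)
  intro x _ hx
  simp only [Finset.mem_insert, Finset.mem_singleton, not_or] at hx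
  rw [h x hx.1 hx.2, sub_self]

lemma aux_sign (m z : ℝ) (hm : 0 ≤ m) : ∃ t : ℝ, |t| = m ∧ (t - z) ^ 2 = (m - |z|) ^ 2 := by
  rcases le_total 0 z with h | h
  · exact ⟨m, abs_of_nonneg hm, by rw [abs_of_nonneg h]⟩
  · exact ⟨-m, by rw [abs_neg, abs_of_nonneg hm], by rw [abs_of_nonpos h]; ring⟩

lemma aux_sq (b z : ℝ) : (|b| - |z|) ^ 2 ≤ (b - z) ^ 2 :=
  sq_le_sq.mpr (abs_abs_sub_abs_le_abs_sub b z)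

/-- The test vector: replacing two coordinates by their common absolute mean. -/
lemma aux_test {n p : ℕ} (hn : 0 < n)
    (X : Matrix (Fin n) (Fin p) ℝ) (Y : Fin n → ℝ)
    (hX : Xᵀ * X = (n : ℝ) • (1 : Matrix (Fin p) (Fin p) ℝ))
    (Λ z : Fin p → ℝ) (hz : z = (1 / (n : ℝ)) • (Xᵀ *ᵥ Y))
    (b : Fin p → ℝ) (hb : ∀ b', slopeObj X Y Λ b ≤ slopeObj X Y Λ b')
    (a c : Fin p) (hac : a ≠ c) :
    ∃ b' : Fin p → ℝ, |b' a| = (|b a| + |b c|) / 2 ∧ |b' c| = (|b a| + |b c|) / 2 ∧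
      (∀ j, j ≠ a → j ≠ c → b' j = b j) ∧
      slopeNorm Λ b ≤ slopeNorm Λ b' +
        n * ((|b a| - |b c|) / 2) * ((|z a| - |z c|) - (|b a| - |b c|) / 2) := by
  have hm : 0 ≤ (|b a| + |b c|) / 2 := by positivity
  obtain ⟨s, hs, hs'⟩ := aux_sign _ (z a) hm
  obtain ⟨t, ht, ht'⟩ := aux_sign _ (z c) hm
  set b' := Function.update (Function.update b a s) c t with hb'
  have ha : b' a = s := by simp [hb', hac]
  have hc : b' c = t := by simp [hb']
  have ho : ∀ j, j ≠ a → j ≠ c → b' j = b j := by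
    intro j h1 h2; simp [hb', h1, h2]
  refine ⟨b', by rw [ha, hs], by rw [hc, ht], ho, ?_⟩
  have h := hb b'
  unfold slopeObj at h
  rw [aux_quad hn X Y hX z hz, aux_quad hn X Y hX z hz] at h
  have hd := aux_sum_pair (fun j => (b' j - z j) ^ 2) (fun j => (b j - z j) ^ 2) a c hac
    (fun j h1 h2 => by simp only [ho j h1 h2])
  simp only [ha, hc, hs', ht'] at hd
  have e1 := aux_sq (b a) (z a)
  have e2 := aux_sq (b c) (z c)
  have hn' : (0 : ℝ) < n := by positivity
  have key : ∑ j, (b' j - z j) ^ 2 - ∑ j, (b j - z j) ^ 2 ≤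
      2 * (((|b a| - |b c|) / 2) * ((|z a| - |z c|) - (|b a| - |b c|) / 2)) := by
    rw [hd]; nlinarith
  have := mul_le_mul_of_nonneg_left key hn'.le
  nlinarith

lemma aux_order {n p : ℕ} (hn : 0 < n)
    (X : Matrix (Fin n) (Fin p) ℝ) (Y : Fin n → ℝ)
    (hX : Xᵀ * X = (n : ℝ) • (1 : Matrix (Fin p) (Fin p) ℝ))
    (Λ z : Fin p → ℝ) (hz : z = (1 / (n : ℝ)) • (Xᵀ *ᵥ Y))
    (b : Fin p → ℝ) (hb : ∀ b', slopeObj X Y Λ b ≤ slopeObj X Y Λ b')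
    (a c : Fin p) (hac : |z c| ≤ |z a|) : |b c| ≤ |b a| := by
  by_contra! hlt
  have hne : a ≠ c := by rintro rfl; exact lt_irrefl _ hlt
  obtain ⟨b', ha, hc, ho, h⟩ := aux_test hn X Y hX Λ z hz b hb a c hne
  have hJ : slopeNorm Λ b' ≤ slopeNorm Λ b := by
    apply ciSup_le
    intro σ
    have hp : ∀ x, |b' x| = (|b x| + |b (Equiv.swap a c x)|) / 2 := by
      intro x
      by_cases h1 : x = a
      · subst h1; rw [ha, Equiv.swap_apply_left]
      · by_cases h2 : x = c
        · subst h2; rw [hc, Equiv.swap_apply_right, add_comm]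
        · rw [ho x h1 h2, Equiv.swap_apply_of_ne_of_ne h1 h2]; ring
    have e1 := aux_le_slopeNorm Λ b σ
    have e2 := aux_le_slopeNorm Λ b (σ.trans (Equiv.swap a c))
    have e3 : ∑ i, Λ i * |b' (σ i)| = (∑ i, Λ i * |b (σ i)| +
        ∑ i, Λ i * |b ((σ.trans (Equiv.swap a c)) i)|) / 2 := by
      rw [← Finset.sum_add_distrib, Finset.sum_div]
      refine Finset.sum_congr rfl fun i _ => ?_
      rw [hp, Equiv.trans_apply]; ring
    linarith
  have hn' : (0 : ℝ) < n := by positivity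
  have : 0 < (n : ℝ) * ((|b c| - |b a|) / 2) * ((|z a| - |z c|) + (|b c| - |b a|) / 2) := by
    apply mul_pos (mul_pos hn' (by linarith)); linarith
  nlinarith

/-- Clustering of SLOPE in orthogonal design: if `τ` sorts `|β̂OLS|` decreasingly and
`|β̂OLS_{τ(i)}| - |β̂OLS_{τ(i+1)}| ≤ (Λ_i - Λ_{i+1})/n`, then the SLOPE estimate has
`|β̂SLOPE_{τ(i)}| = |β̂SLOPE_{τ(i+1)}|`. -/
theorem slope_clusters_of_close_ols {n p : ℕ} (hn : 0 < n)
    (X : Matrix (Fin n) (Fin p) ℝ) (Y : Fin n → ℝ)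
    (hX : Xᵀ * X = (n : ℝ) • (1 : Matrix (Fin p) (Fin p) ℝ))
    (Λ : Fin p → ℝ) (hΛanti : Antitone Λ) (hΛnonneg : ∀ i, 0 ≤ Λ i)
    (βOLS : Fin p → ℝ) (hOLS : βOLS = (1 / (n : ℝ)) • (Xᵀ *ᵥ Y))
    (βS : Fin p → ℝ) (hβS : ∀ b, slopeObj X Y Λ βS ≤ slopeObj X Y Λ b)
    (τ : Equiv.Perm (Fin p))
    (hτ : ∀ i j : Fin p, i ≤ j → |βOLS (τ j)| ≤ |βOLS (τ i)|) :
    ∀ i : Fin p, ∀ h : (i : ℕ) + 1 < p,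
      |βOLS (τ i)| - |βOLS (τ ⟨(i : ℕ) + 1, h⟩)| ≤ (Λ i - Λ ⟨(i : ℕ) + 1, h⟩) / n →
      |βS (τ i)| = |βS (τ ⟨(i : ℕ) + 1, h⟩)| := by
  intro i h hgap
  set k : Fin p := ⟨(i : ℕ) + 1, h⟩ with hk
  have hik : i < k := by simp [hk, Fin.lt_def]
  have hsort : Antitone fun j => |βS (τ j)| := fun j l hjl =>
    aux_order hn X Y hX Λ βOLS hOLS βS hβS (τ j) (τ l) (hτ j l hjl)
  by_contra hne
  have hlt : |βS (τ k)| < |βS (τ i)| := lt_of_le_of_ne (hsort hik.le) (Ne.symm hne)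
  have hne' : τ i ≠ τ k := fun e => hik.ne (τ.injective e)
  obtain ⟨b', ha, hc, ho, hJ⟩ :=
    aux_test hn X Y hX Λ βOLS hOLS βS hβS (τ i) (τ k) hne'
  have ho' : ∀ j, j ≠ i → j ≠ k → b' (τ j) = βS (τ j) := fun j h1 h2 =>
    ho _ (fun e => h1 (τ.injective e)) (fun e => h2 (τ.injective e))
  have hsort' : Antitone fun j => |b' (τ j)| := by
    intro j l hjl
    show |b' (τ l)| ≤ |b' (τ j)|
    have hup : ∀ x, x < i → |b' (τ x)| = |βS (τ x)| := fun x hx => by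
      rw [ho' x hx.ne (hx.trans hik).ne]
    have hdn : ∀ x, k < x → |b' (τ x)| = |βS (τ x)| := fun x hx => by
      rw [ho' x (hik.trans hx).ne' hx.ne']
    have htri : ∀ x : Fin p, x < i ∨ (x = i ∨ x = k) ∨ k < x := by
      intro x
      simp only [hk, Fin.lt_def, Fin.ext_iff]
      omega
    have hmid : ∀ x, (x = i ∨ x = k) →
        |b' (τ x)| = (|βS (τ i)| + |βS (τ k)|) / 2 := by
      rintro x (rfl | rfl)
      · exact ha
      · exact hc
    rcases htri j with hj | hj | hj <;> rcases htri l with hl | hl | hl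
    · rw [hup j hj, hup l hl]; exact hsort hjl
    · rw [hup j hj, hmid l hl]
      have := hsort hj.le
      dsimp only at this
      linarith
    · rw [hup j hj, hdn l hl]; exact hsort hjl
    · exfalso
      rcases hj with rfl | rfl
      · exact absurd hjl (not_le.mpr hl)
      · exact absurd hjl (not_le.mpr (hl.trans hik))
    · rw [hmid j hj, hmid l hl]
    · rw [hmid j hj, hdn l hl]
      have := hsort hl.le
      dsimp only at this
      linarith
    · exact absurd hjl (not_le.mpr ((hl.trans hik).trans hj))
    · exfalso
      rcases hl with rfl | rfl
      · exact absurd hjl (not_le.mpr (hik.trans hj))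
      · exact absurd hjl (not_le.mpr hj)
    · rw [hdn j hj, hdn l hl]; exact hsort hjl
  rw [aux_slopeNorm_sorted Λ βS hΛanti τ hsort, aux_slopeNorm_sorted Λ b' hΛanti τ hsort'] at hJ
  have hd := aux_sum_pair (fun j => Λ j * |b' (τ j)|) (fun j => Λ j * |βS (τ j)|) i k hik.ne
    (fun j h1 h2 => by simp only [ho' j h1 h2])
  simp only [ha, hc] at hd
  have hn' : (0 : ℝ) < n := by positivity
  rw [le_div_iff₀ hn'] at hgap
  set ε := (|βS (τ i)| - |βS (τ k)|) / 2 with hε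
  have hεpos : 0 < ε := by rw [hε]; linarith
  have e1 := mul_le_mul_of_nonneg_left hgap hεpos.le
  have e2 : 0 < (n : ℝ) * ε * ε := by positivity
  have hd2 : ∑ j, Λ j * |b' (τ j)| - ∑ j, Λ j * |βS (τ j)| = -(ε * (Λ i - Λ k)) := by
    rw [hd, hε]; ring
  nlinarith
end

section
/- For each n ≥ 1 consider the linear model Y^(n) = X^(n)β + ε^(n) with X^(n) ∈ ℝ^{n×p} deterministic of rank p, ε^(n) ~ N(0, σ²I_n), and assume n^{-1}(X^(n))′X^(n) → C for a positive definite matrix C. Let β̂^SLOPE_n be the SLOPE estimator with tuning vector Λ^(n) = (λ₁^(n),…,λ_p^(n)), λ₁^(n) ≥ … ≥ λ_p^(n) ≥ 0, λ₁^(n) > 0. If λ₁^(n)/n → 0 as n → ∞, then β̂^SLOPE_n → β almost surely. -/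
open Matrix MeasureTheory ProbabilityTheory Filter Topology

lemma slopeNorm_nonneg {p : ℕ} (Λ : Fin p → ℝ) (h : ∀ i, 0 ≤ Λ i) (b : Fin p → ℝ) :
    0 ≤ slopeNorm Λ b :=
  Real.iSup_nonneg fun _ => Finset.sum_nonneg fun i _ => mul_nonneg (h i) (abs_nonneg _)

lemma slopeNorm_le {p : ℕ} (Λ : Fin p → ℝ) (l : ℝ) (h : ∀ i, Λ i ≤ l) (b : Fin p → ℝ) :
    slopeNorm Λ b ≤ l * ∑ i, |b i| := by
  refine ciSup_le fun s => ?_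
  rw [← Equiv.sum_comp s (fun i => |b i|), Finset.mul_sum]
  exact Finset.sum_le_sum fun i _ => mul_le_mul_of_nonneg_right (h i) (abs_nonneg _)

lemma subG_lin {Ω : Type*} [MeasurableSpace Ω] (P : Measure Ω) [IsProbabilityMeasure P] {m : ℕ}
    (s : NNReal) (e : Ω → Fin m → ℝ)
    (he : Measure.map e P = Measure.pi (fun _ : Fin m => gaussianReal 0 (s ^ 2)))
    (a : Fin m → ℝ) (c : NNReal) (hc : (∑ i, a i ^ 2) * (s : ℝ) ^ 2 ≤ c) :
    HasSubgaussianMGF (fun ω => ∑ i, a i * e ω i) c P := by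
  have hm : AEMeasurable e P := by
    apply AEMeasurable.of_map_ne_zero
    rw [he]
    exact IsProbabilityMeasure.ne_zero _
  have hg : HasSubgaussianMGF (fun x : ℝ => x) (s ^ 2) (gaussianReal 0 (s ^ 2)) := by
    refine ⟨fun t => integrable_exp_mul_gaussianReal t, fun t => ?_⟩
    rw [mgf_fun_id_gaussianReal]
    simp
  have h1 : ∀ i, HasSubgaussianMGF (fun x : Fin m → ℝ => a i * x i)
      (NNReal.mk (a i ^ 2) (sq_nonneg _) * s ^ 2)
      (Measure.pi (fun _ : Fin m => gaussianReal 0 (s ^ 2))) := by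
    intro i
    have h2 : HasSubgaussianMGF ((fun x : ℝ => x) ∘ (fun x : Fin m → ℝ => x i)) (s ^ 2)
      (Measure.pi (fun _ : Fin m => gaussianReal 0 (s ^ 2))) := by
      apply HasSubgaussianMGF.of_map (measurable_pi_apply i).aemeasurable
      have := (measurePreserving_eval (fun _ : Fin m => gaussianReal 0 (s ^ 2)) i).map_eq
      unfold Function.eval at this
      rw [this]
      exact hg
    exact h2.const_mul (a i)
  have hind : iIndepFun (fun i (x : Fin m → ℝ) => a i * x i)
      (Measure.pi (fun _ : Fin m => gaussianReal 0 (s ^ 2))) :=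
    iIndepFun_pi (X := fun i x => a i * x) (fun i => by fun_prop)
  have h3 := HasSubgaussianMGF.sum_of_iIndepFun hind (s := Finset.univ) (fun i _ => h1 i)
  rw [← he] at h3
  have h4 := HasSubgaussianMGF.of_map hm h3
  refine ⟨h4.integrable_exp_mul, fun t => (h4.mgf_le t).trans ?_⟩
  apply Real.exp_le_exp.2
  have : ((∑ i, (NNReal.mk (a i ^ 2) (sq_nonneg _) * s ^ 2 : NNReal) : NNReal) : ℝ) ≤ c := by
    push_cast
    rw [← Finset.sum_mul]
    exact hc
  have := mul_le_mul_of_nonneg_right this (sq_nonneg t)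
  linarith

lemma subG_tendsto {Ω : Type*} [MeasurableSpace Ω] (P : Measure Ω) [IsProbabilityMeasure P]
    (W : ℕ → Ω → ℝ) (K : NNReal) (hK : 0 < K)
    (hW : ∀ n : ℕ, HasSubgaussianMGF (W n) (K * (n + 1)) P) :
    ∀ᵐ ω ∂P, Tendsto (fun n : ℕ => W n ω / ((n : ℝ) + 1)) atTop (𝓝 0) := by
  have key : ∀ V : ℕ → Ω → ℝ, (∀ n : ℕ, HasSubgaussianMGF (V n) (K * (n + 1)) P) →
      ∀ t : ℝ, 0 < t → ∀ᵐ ω ∂P, ∀ᶠ n : ℕ in atTop, V n ω < t * ((n : ℝ) + 1) := by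
    intro V hV t ht
    have hb : ∀ n : ℕ, P {ω | t * ((n : ℝ) + 1) ≤ V n ω}
        ≤ ENNReal.ofReal (Real.exp (n * (-(t ^ 2 / (2 * K))))) := by
      intro n
      have h := (hV n).measure_ge_le (ε := t * ((n : ℝ) + 1)) (by positivity)
      rw [← ENNReal.ofReal_toReal (measure_ne_top P _)]
      apply ENNReal.ofReal_le_ofReal
      refine h.trans (Real.exp_le_exp.2 ?_)
      push_cast
      have hK' : (0 : ℝ) < K := hK
      have : -(t * ((n : ℝ) + 1)) ^ 2 / (2 * (K * (n + 1))) =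
          ((n : ℝ) + 1) * (-(t ^ 2 / (2 * K))) := by
        field_simp
      rw [this]
      have : 0 < t ^ 2 / (2 * (K : ℝ)) := by positivity
      linarith
    have hs : Summable (fun n : ℕ => Real.exp (n * (-(t ^ 2 / (2 * (K : ℝ)))))) := by
      apply Real.summable_exp_nat_mul_iff.2
      have hK' : (0 : ℝ) < K := hK
      have : 0 < t ^ 2 / (2 * (K : ℝ)) := by positivity
      linarith
    have hfin : ∑' n : ℕ, P {ω | t * ((n : ℝ) + 1) ≤ V n ω} ≠ ⊤ := by
      refine ne_top_of_le_ne_top ?_ (ENNReal.tsum_le_tsum hb)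
      rw [← ENNReal.ofReal_tsum_of_nonneg (fun _ => (Real.exp_pos _).le) hs]
      exact ENNReal.ofReal_ne_top
    filter_upwards [ae_eventually_notMem hfin] with ω hω
    filter_upwards [hω] with n hn
    simpa using hn
  have h1 : ∀ᵐ ω ∂P, ∀ k : ℕ, ∀ᶠ n : ℕ in atTop, W n ω < (1 / ((k : ℝ) + 1)) * ((n : ℝ) + 1) :=
    ae_all_iff.2 fun k => key W hW _ (by positivity)
  have h2 : ∀ᵐ ω ∂P, ∀ k : ℕ, ∀ᶠ n : ℕ in atTop,
      (-W n) ω < (1 / ((k : ℝ) + 1)) * ((n : ℝ) + 1) :=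
    ae_all_iff.2 fun k => key (fun n => -W n) (fun n => (hW n).neg) _ (by positivity)
  filter_upwards [h1, h2] with ω ha hb
  rw [Metric.tendsto_nhds]
  intro r hr
  obtain ⟨k, hk⟩ := exists_nat_one_div_lt hr
  filter_upwards [ha k, hb k] with n hn1 hn2
  have hn : (0 : ℝ) < (n : ℝ) + 1 := by positivity
  rw [Real.dist_eq, sub_zero, abs_div, abs_of_pos hn, div_lt_iff₀ hn]
  have h3 : |W n ω| < (1 / ((k : ℝ) + 1)) * ((n : ℝ) + 1) := by
    rw [abs_lt]
    simp only [Pi.neg_apply] at hn2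
    constructor <;> linarith
  exact h3.trans (mul_lt_mul_of_pos_right hk hn)

lemma posDef_lower {p : ℕ} (C : Matrix (Fin p) (Fin p) ℝ) (hC : C.PosDef) :
    ∃ c : ℝ, 0 < c ∧ ∀ u : Fin p → ℝ, c * ‖u‖ ^ 2 ≤ u ⬝ᵥ (C *ᵥ u) := by
  have hcont : Continuous fun u : Fin p → ℝ => u ⬝ᵥ (C *ᵥ u) := by
    simp only [dotProduct, mulVec]
    fun_prop
  have hpos : ∀ u : Fin p → ℝ, u ≠ 0 → 0 < u ⬝ᵥ (C *ᵥ u) := by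
    intro u hu
    simpa using hC.dotProduct_mulVec_pos hu
  by_cases hne : (Metric.sphere (0 : Fin p → ℝ) 1).Nonempty
  · obtain ⟨v, hv, hmin⟩ := (isCompact_sphere (0 : Fin p → ℝ) 1).exists_isMinOn hne
      hcont.continuousOn
    have hv0 : v ≠ 0 := by
      rintro rfl
      simp at hv
    refine ⟨_, hpos v hv0, fun u => ?_⟩
    by_cases hu : u = 0
    · simp [hu]
    have hn : 0 < ‖u‖ := norm_pos_iff.2 hu
    have hmem : ‖u‖⁻¹ • u ∈ Metric.sphere (0 : Fin p → ℝ) 1 := by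
      simp [norm_smul, hn.ne']
    have := hmin hmem
    simp only [Set.mem_ofPred_eq, mulVec_smul, dotProduct_smul, smul_dotProduct, smul_eq_mul] at this
    calc _ ≤ (‖u‖⁻¹ * (‖u‖⁻¹ * u ⬝ᵥ (C *ᵥ u))) * ‖u‖ ^ 2 :=
          mul_le_mul_of_nonneg_right this (sq_nonneg _)
      _ = _ := by field_simp
  · refine ⟨1, one_pos, fun u => ?_⟩
    by_cases hu : u = 0
    · simp [hu]
    exact absurd ⟨‖u‖⁻¹ • u, by simp [norm_smul, hu]⟩ hne

lemma quad_le {p : ℕ} (D : Matrix (Fin p) (Fin p) ℝ) (u : Fin p → ℝ) :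
    -((∑ i, ∑ j, |D i j|) * ‖u‖ ^ 2) ≤ u ⬝ᵥ (D *ᵥ u) := by
  simp only [dotProduct, mulVec, Finset.mul_sum, Finset.sum_mul]
  rw [← Finset.sum_neg_distrib]
  refine Finset.sum_le_sum fun i _ => ?_
  rw [← Finset.sum_neg_distrib]
  refine Finset.sum_le_sum fun j _ => ?_
  have h1 : |u i * (D i j * u j)| ≤ |D i j| * ‖u‖ ^ 2 := by
    rw [abs_mul, abs_mul]
    have hi : |u i| ≤ ‖u‖ := norm_le_pi_norm u i
    have hj : |u j| ≤ ‖u‖ := norm_le_pi_norm u j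
    calc _ = |D i j| * (|u i| * |u j|) := by ring
      _ ≤ |D i j| * (‖u‖ * ‖u‖) := by gcongr
      _ = _ := by ring
  linarith [neg_abs_le (u i * (D i j * u j))]

lemma quad_bound {k x d e : ℝ} (hk : 0 < k) (hx : 0 ≤ x) (hd : 0 ≤ d) (he : 0 ≤ e)
    (h : k * x ^ 2 ≤ d * x + e) : x ≤ d / k + Real.sqrt (e / k) := by
  by_contra! hlt
  have hs := Real.sqrt_nonneg (e / k)
  have hsq : Real.sqrt (e / k) ^ 2 = e / k := Real.sq_sqrt (by positivity)
  have hdk : 0 ≤ d / k := by positivity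
  set s := Real.sqrt (e / k)
  have h1 : x ^ 2 ≤ (d / k) * x + s ^ 2 := by
    rw [hsq, div_mul_eq_mul_div, ← add_div, le_div_iff₀ hk]
    linarith
  nlinarith

lemma slope_basic {n p : ℕ} (X : Matrix (Fin n) (Fin p) ℝ) (e : Fin n → ℝ) (Λ : Fin p → ℝ)
    (l : ℝ) (h0 : ∀ i, 0 ≤ Λ i) (hl : ∀ i, Λ i ≤ l) (β b : Fin p → ℝ)
    (h : slopeObj X (X *ᵥ β + e) Λ b ≤ slopeObj X (X *ᵥ β + e) Λ β) :
    (1 / 2) * ((b - β) ⬝ᵥ ((Xᵀ * X) *ᵥ (b - β))) ≤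
      (∑ j, |∑ i, X i j * e i|) * ‖b - β‖ + l * ∑ i, |β i| := by
  set u := b - β with hu
  have hb : b = β + u := by simp [hu]
  have h1 := slopeNorm_nonneg Λ h0 b
  have h2 := slopeNorm_le Λ l hl β
  unfold slopeObj at h
  have e1 : ∑ i, ((X *ᵥ β + e) i - (X *ᵥ β) i) ^ 2 = e ⬝ᵥ e := by
    simp [dotProduct, pow_two]
  have e2 : ∑ i, ((X *ᵥ β + e) i - (X *ᵥ b) i) ^ 2 =
      e ⬝ᵥ e - 2 * (e ⬝ᵥ (X *ᵥ u)) + (X *ᵥ u) ⬝ᵥ (X *ᵥ u) := by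
    rw [hb, mulVec_add]
    simp only [dotProduct, Finset.mul_sum, Pi.add_apply]
    rw [← Finset.sum_sub_distrib, ← Finset.sum_add_distrib]
    exact Finset.sum_congr rfl fun i _ => by ring
  rw [e1, e2] at h
  have e3 : (X *ᵥ u) ⬝ᵥ (X *ᵥ u) = u ⬝ᵥ ((Xᵀ * X) *ᵥ u) := by
    rw [← mulVec_mulVec, dotProduct_mulVec u, vecMul_transpose]
  have e4 : e ⬝ᵥ (X *ᵥ u) = ∑ j, (∑ i, X i j * e i) * u j := by
    simp only [dotProduct, mulVec, Finset.mul_sum, Finset.sum_mul]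
    rw [Finset.sum_comm]
    exact Finset.sum_congr rfl fun j _ => Finset.sum_congr rfl fun i _ => by ring
  have e5 : e ⬝ᵥ (X *ᵥ u) ≤ (∑ j, |∑ i, X i j * e i|) * ‖u‖ := by
    rw [e4, Finset.sum_mul]
    refine Finset.sum_le_sum fun j _ => (le_abs_self _).trans ?_
    rw [abs_mul]
    exact mul_le_mul_of_nonneg_left (norm_le_pi_norm u j) (abs_nonneg _)
  rw [← e3]
  linarith

/-- Strong consistency of SLOPE: in the sequence of linear models
`Y⁽ⁿ⁾ = X⁽ⁿ⁾β + ε⁽ⁿ⁾` (with `n ≥ 1` encoded as `n + 1` observations), with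
deterministic full-column-rank designs, errors `ε⁽ⁿ⁾ ~ N(0, σ²Iₙ)`,
`n⁻¹(X⁽ⁿ⁾)ᵀX⁽ⁿ⁾ → C` positive definite, tuning vectors `Λ⁽ⁿ⁾` sorted decreasingly
with nonnegative entries and `λ₁⁽ⁿ⁾ > 0`: if `λ₁⁽ⁿ⁾/n → 0`, then the SLOPE
estimators converge to `β` almost surely. -/
theorem slope_strong_consistency {Ω : Type*} [MeasurableSpace Ω]
    (P : Measure Ω) [IsProbabilityMeasure P] {p : ℕ} (hp : 0 < p)
    (X : (n : ℕ) → Matrix (Fin (n + 1)) (Fin p) ℝ)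
    (hrank : ∀ n, p ≤ n + 1 → (X n).rank = p)
    (σ : NNReal) (hσ : 0 < σ)
    (ε : (n : ℕ) → Ω → (Fin (n + 1) → ℝ))
    (hε : ∀ n, Measure.map (ε n) P =
      Measure.pi (fun _ : Fin (n + 1) => gaussianReal 0 (σ ^ 2)))
    (β : Fin p → ℝ)
    (Y : (n : ℕ) → Ω → (Fin (n + 1) → ℝ))
    (hY : ∀ n ω, Y n ω = X n *ᵥ β + ε n ω)
    (C : Matrix (Fin p) (Fin p) ℝ) (hC : C.PosDef)
    (hlim : Tendsto (fun n : ℕ => (1 / ((n : ℝ) + 1)) • ((X n)ᵀ * X n)) atTop (𝓝 C))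
    (Λ : ℕ → Fin p → ℝ) (hΛanti : ∀ n, Antitone (Λ n))
    (hΛnonneg : ∀ n i, 0 ≤ Λ n i) (hlam1 : ∀ n, 0 < Λ n ⟨0, hp⟩)
    (hlamn : Tendsto (fun n : ℕ => Λ n ⟨0, hp⟩ / ((n : ℝ) + 1)) atTop (𝓝 0))
    (βS : (n : ℕ) → Ω → (Fin p → ℝ))
    (hβS : ∀ n ω b, slopeObj (X n) (Y n ω) (Λ n) (βS n ω) ≤ slopeObj (X n) (Y n ω) (Λ n) b) :
    ∀ᵐ ω ∂P, Tendsto (fun n => βS n ω) atTop (𝓝 β) := by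
  have hent : ∀ i j, Tendsto (fun n : ℕ => ((1 / ((n : ℝ) + 1)) • ((X n)ᵀ * X n)) i j) atTop
      (𝓝 (C i j)) := fun i j => ((tendsto_pi_nhds.1 ((tendsto_pi_nhds.1 hlim) i)) j)
  have hZ : ∀ᵐ ω ∂P, ∀ j : Fin p,
      Tendsto (fun n : ℕ => (∑ i, X n i j * ε n ω i) / ((n : ℝ) + 1)) atTop (𝓝 0) := by
    refine ae_all_iff.2 fun j => ?_
    obtain ⟨M, hM⟩ := (hent j j).bddAbove_range
    have hM' : ∀ n : ℕ, (∑ i, X n i j ^ 2) ≤ (|M| + 1) * ((n : ℝ) + 1) := by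
      intro n
      have h := hM ⟨n, rfl⟩
      simp only [Matrix.smul_apply, Matrix.mul_apply, transpose_apply, smul_eq_mul] at h
      have hn : (0 : ℝ) < (n : ℝ) + 1 := by positivity
      rw [one_div, inv_mul_le_iff₀ hn] at h
      calc ∑ i, X n i j ^ 2 = ∑ i, X n i j * X n i j := by simp [pow_two]
        _ ≤ ((n : ℝ) + 1) * M := h
        _ ≤ ((n : ℝ) + 1) * (|M| + 1) := by
          gcongr
          linarith [le_abs_self M]
        _ = _ := by ring
    have hK0 : 0 < |M| + 1 := by positivity
    refine subG_tendsto P (fun n ω => ∑ i, X n i j * ε n ω i)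
      (⟨|M| + 1, hK0.le⟩ * σ ^ 2) (mul_pos hK0 (pow_pos hσ 2)) fun n => ?_
    refine subG_lin P σ (ε n) (hε n) (fun i => X n i j) _ ?_
    push_cast
    calc (∑ i, X n i j ^ 2) * (σ : ℝ) ^ 2 ≤ ((|M| + 1) * ((n : ℝ) + 1)) * (σ : ℝ) ^ 2 :=
          mul_le_mul_of_nonneg_right (hM' n) (sq_nonneg _)
      _ = (|M| + 1) * (σ : ℝ) ^ 2 * ((n : ℝ) + 1) := by ring
  obtain ⟨c, hc, hCl⟩ := posDef_lower C hC
  have hD : Tendsto (fun n : ℕ => ∑ i, ∑ j,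
      |((1 / ((n : ℝ) + 1)) • ((X n)ᵀ * X n) - C) i j|) atTop (𝓝 0) := by
    have : Tendsto (fun n : ℕ => ∑ i, ∑ j,
      |((1 / ((n : ℝ) + 1)) • ((X n)ᵀ * X n)) i j - C i j|) atTop
        (𝓝 (∑ i, ∑ j, |C i j - C i j|)) :=
      tendsto_finsetSum _ fun i _ => tendsto_finsetSum _ fun j _ =>
        ((hent i j).sub_const _).abs
    simpa using this
  have hDev : ∀ᶠ n : ℕ in atTop, (∑ i, ∑ j,
      |((1 / ((n : ℝ) + 1)) • ((X n)ᵀ * X n) - C) i j|) < c / 2 :=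
    hD.eventually (gt_mem_nhds (half_pos hc))
  filter_upwards [hZ] with ω hω
  have hd : Tendsto (fun n : ℕ => ∑ j, |(∑ i, X n i j * ε n ω i) / ((n : ℝ) + 1)|) atTop
      (𝓝 0) := by
    have : Tendsto (fun n : ℕ => ∑ j, |(∑ i, X n i j * ε n ω i) / ((n : ℝ) + 1)|) atTop
      (𝓝 (∑ _j : Fin p, |(0 : ℝ)|)) := tendsto_finsetSum _ fun j _ => (hω j).abs
    simpa using this
  have he : Tendsto (fun n : ℕ => Λ n ⟨0, hp⟩ / ((n : ℝ) + 1) * ∑ i, |β i|) atTop (𝓝 0) := by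
    simpa using hlamn.mul_const (∑ i, |β i|)
  have hk : 0 < c / 4 := by positivity
  have hbd : Tendsto (fun n : ℕ => (∑ j, |(∑ i, X n i j * ε n ω i) / ((n : ℝ) + 1)|) / (c / 4) +
      Real.sqrt ((Λ n ⟨0, hp⟩ / ((n : ℝ) + 1) * ∑ i, |β i|) / (c / 4))) atTop (𝓝 0) := by
    have h1 := (hd.div_const (c / 4)).add (he.div_const (c / 4)).sqrt
    simpa using h1
  rw [tendsto_iff_norm_sub_tendsto_zero]
  refine squeeze_zero' (Eventually.of_forall fun _ => norm_nonneg _) ?_ hbd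
  filter_upwards [hDev] with n hn
  have hn1 : (0 : ℝ) < (n : ℝ) + 1 := by positivity
  refine quad_bound hk (norm_nonneg _) (Finset.sum_nonneg fun _ _ => abs_nonneg _)
    (mul_nonneg (div_nonneg (hΛnonneg _ _) hn1.le) (Finset.sum_nonneg fun _ _ => abs_nonneg _)) ?_
  have hb := hβS n ω β
  rw [hY n ω] at hb
  have hbas := slope_basic (X n) (ε n ω) (Λ n) (Λ n ⟨0, hp⟩) (hΛnonneg n)
    (fun i => hΛanti n (Fin.mk_le_of_le_val (Nat.zero_le _))) β (βS n ω) hb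
  set u := βS n ω - β with hu
  have hq := quad_le ((1 / ((n : ℝ) + 1)) • ((X n)ᵀ * X n) - C) u
  rw [sub_mulVec, dotProduct_sub, smul_mulVec, dotProduct_smul, smul_eq_mul] at hq
  have hcu := hCl u
  have hlow : c / 2 * ‖u‖ ^ 2 ≤ 1 / ((n : ℝ) + 1) * (u ⬝ᵥ (((X n)ᵀ * X n) *ᵥ u)) := by
    have := mul_le_mul_of_nonneg_right hn.le (sq_nonneg ‖u‖)
    linarith
  have hfin := mul_le_mul_of_nonneg_left hbas (one_div_pos.2 hn1).le
  have es : ∑ j, |(∑ i, X n i j * ε n ω i) / ((n : ℝ) + 1)| =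
      1 / ((n : ℝ) + 1) * ∑ j, |∑ i, X n i j * ε n ω i| := by
    rw [Finset.mul_sum]
    refine Finset.sum_congr rfl fun j _ => ?_
    rw [abs_div, abs_of_pos hn1]
    ring
  rw [es]
  have er : Λ n ⟨0, hp⟩ / ((n : ℝ) + 1) = 1 / ((n : ℝ) + 1) * Λ n ⟨0, hp⟩ := by ring
  rw [er]
  linarith
end
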